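/- Correctness of the improved MIP formulation: let S* ⊆ S contain every path s with p(s) > 0 and let U : S → ℝ be a utility function. Call a pair (z, x) feasible if z assigns to each j ∈ D, s_j ∈ S_j, s_{I(j)} ∈ S_{I(j)} a value z(s_j | s_{I(j)}) ∈ {0,1} with ∑_{s_j∈S_j} z(s_j | s_{I(j)}) = 1 for all j ∈ D and s_{I(j)}, and x : S* → [0,1] satisfies ∑_{s ∈ S* ∩ S_{s_j|s_{I(j)}}} x(s) ≤ Γ(s_j|s_{I(j)}) · z(s_j | s_{I(j)}) for all j ∈ D, s_j, s_{I(j)} (with Γ(s_j|s_{I(j)}) = min{ |S* ∩ S_{s_j|s_{I(j)}}|, ∏_{k ∈ C \ ({j} ∪ I(j))} |S_k| }) and ∑_{s∈S*} p(s)x(s) = 1. Then the maximum of ∑_{s∈S*} p(s)x(s)U(s) over all feasible pairs (z, x) equals the maximum over all strategies Z of the expected utility ∑_{s∈S(Z)} p(s)U(s). -/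

import Mathlib

/-!
STATEMENT 12: Correctness of the improved MIP formulation: let S* ⊆ S contain every
path s with p(s) > 0 and let U : S → ℝ be a utility function. Call a pair (z, x)
feasible if z assigns to each j ∈ D, s_j ∈ S_j, s_{I(j)} ∈ S_{I(j)} a value
z(s_j | s_{I(j)}) ∈ {0,1} with ∑_{s_j∈S_j} z(s_j | s_{I(j)}) = 1 for all j ∈ D and
s_{I(j)}, and x : S* → [0,1] satisfies
∑_{s ∈ S* ∩ S_{s_j|s_{I(j)}}} x(s) ≤ Γ(s_j|s_{I(j)}) · z(s_j | s_{I(j)}) for all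
j ∈ D, s_j, s_{I(j)} (with
Γ(s_j|s_{I(j)}) = min{ |S* ∩ S_{s_j|s_{I(j)}}|, ∏_{k ∈ C \ ({j} ∪ I(j))} |S_k| })
and ∑_{s∈S*} p(s)x(s) = 1. Then the maximum of ∑_{s∈S*} p(s)x(s)U(s) over all
feasible pairs (z, x) equals the maximum over all strategies Z of the expected
utility ∑_{s∈S(Z)} p(s)U(s).
-/

open Finset

attribute [local instance] Classical.propDecidable

/-- Restriction of a path `s` to the information set `I j` of node `j`. -/
def restrict {n : ℕ} {S : Fin n → Type} (I : Fin n → Finset (Fin n))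
    (s : ∀ j, S j) (j : Fin n) : ∀ i : (I j), S i.1 :=
  fun i => s i.1

/-- The path probability `p(s) = ∏_{j ∈ C} P(s_j | s_{I(j)})`. -/
def pathProb {n : ℕ} {S : Fin n → Type} (C : Finset (Fin n))
    (I : Fin n → Finset (Fin n))
    (P : ∀ j : Fin n, (∀ i : (I j), S i.1) → S j → ℝ)
    (s : ∀ j, S j) : ℝ :=
  ∏ j ∈ C, P j (restrict I s j) (s j)

/-!
Turning the decision nodes into deterministic chance nodes shows that the paths compatible with a
strategy `Z` have total probability `1`. A feasible `z` is the indicator of a strategy `Z`, and the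
constraints with `z = 0` force `x` to vanish off the paths compatible with `Z`. Hence
`p * x ≤ p * 1_{S(Z)}` pointwise; as both sides sum to `1` they agree, so the objective value is
`EU(Z)`. Conversely, `1_{S(Z)}` is feasible because a path compatible with `Z` is determined by its
chance nodes, which bounds the number of compatible paths in each constraint by `Γ`.
-/

section FiniteSums

variable {ι : Type*}

lemma sum_piFinset_update {S : ι → Type*} {M : Type*} [Fintype ι] [DecidableEq ι]
    [AddCommMonoid M] {F : ∀ j, Finset (S j)} {m : ι} {c : S m} (hF : F m = {c}) (A : Finset (S m))
    (f : (∀ j, S j) → M) :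
    ∑ s ∈ Fintype.piFinset (Function.update F m A), f s
      = ∑ s ∈ Fintype.piFinset F, ∑ a ∈ A, f (Function.update s m a) := by
  rw [← sum_product']
  refine sum_nbij' (fun s => (Function.update s m c, s m)) (fun q => Function.update q.1 m q.2)
    ?_ ?_ ?_ ?_ ?_
  · intro s hs
    rw [Fintype.mem_piFinset] at hs
    refine mem_product.mpr ⟨Fintype.mem_piFinset.mpr fun j => ?_, by simpa using hs m⟩
    obtain rfl | hj := eq_or_ne j m
    · simp [hF]
    · simpa [hj] using hs j
  · rintro ⟨s, a⟩ hsa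
    obtain ⟨hs, ha⟩ := mem_product.mp hsa
    refine Fintype.mem_piFinset.mpr fun j => ?_
    obtain rfl | hj := eq_or_ne j m
    · simpa using ha
    · simpa [hj] using Fintype.mem_piFinset.mp hs j
  · simp
  · rintro ⟨s, a⟩ hsa
    have hsm : s m = c := by
      simpa [hF] using Fintype.mem_piFinset.mp (mem_product.mp hsa).1 m
    simp [← hsm]
  · simp

-- Freezing the coordinates outside `T` at `s₀` lets the induction sum out the largest index first.
lemma sum_piFinset_piecewise_prod_eq_one {S : ι → Type*} {R : Type*} [Fintype ι] [LinearOrder ι]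
    [DecidableEq ι] [∀ j, Fintype (S j)] [CommSemiring R] {q : ι → (∀ k, S k) → R}
    (hq : ∀ j, DependsOn (q j) (Set.Iic j))
    (hsum : ∀ j s, ∑ a, q j (Function.update s j a) = 1) (s₀ : ∀ k, S k) (T : Finset ι) :
    ∑ s ∈ Fintype.piFinset (T.piecewise (fun _ => univ) fun j => {s₀ j}), ∏ j ∈ T, q j s = 1 := by
  induction T using Finset.induction_on_max with
  | empty => simp
  | insert m T hT ih =>
    have hm : m ∉ T := fun h => (hT m h).false
    rw [piecewise_insert, sum_piFinset_update (piecewise_eq_of_notMem T _ _ hm), ← ih]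
    refine sum_congr rfl fun s _ => ?_
    have hprod (a : S m) : ∏ j ∈ T, q j (Function.update s m a) = ∏ j ∈ T, q j s :=
      prod_congr rfl fun j hj => hq j fun i hi =>
        Function.update_of_ne ((Set.mem_Iic.mp hi).trans_lt (hT j hj)).ne _ _
    simp only [prod_insert hm, hprod, ← sum_mul, hsum, one_mul]

lemma card_le_prod_card_of_injOn_restrict {S : ι → Type*} [∀ k, Fintype (S k)]
    {A : Finset (∀ k, S k)} {T : Finset ι}
    (h : Set.InjOn (Finset.restrict T) (A : Set (∀ k, S k))) :
    #A ≤ ∏ k ∈ T, Fintype.card (S k) := by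
  calc #A ≤ Fintype.card (∀ k : T, S k) :=
        card_le_card_of_injOn (Finset.restrict T) (fun _ _ => mem_univ _) h
    _ = ∏ k ∈ T, Fintype.card (S k) := by
        rw [Fintype.card_pi, prod_coe_sort T fun k => Fintype.card (S k)]

lemma exists_eq_single_of_sum_eq_one {R : Type*} [Fintype ι] [DecidableEq ι]
    [NonAssocSemiring R] [CharZero R] {z : ι → R} (h01 : ∀ a, z a = 0 ∨ z a = 1)
    (hsum : ∑ a, z a = 1) : ∃ a, z = Pi.single a 1 := by
  have hz (a : ι) : z a = if z a = 1 then 1 else 0 := by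
    rcases h01 a with h | h <;> simp [h]
  have hcard : #{a | z a = 1} = 1 := by
    rw [sum_congr rfl fun a _ => hz a, sum_boole] at hsum
    exact_mod_cast hsum
  obtain ⟨a, ha⟩ := card_eq_one.mp hcard
  refine ⟨a, funext fun b => ?_⟩
  have hb : z b = 1 ↔ b = a := by simpa using congrArg (b ∈ ·) ha
  rw [hz b, Pi.single_apply]
  simp only [hb]

lemma sum_mul_ite_mem {R : Type*} [DecidableEq ι] [NonAssocSemiring R] {p : ι → R} {A : Finset ι}
    (hp : ∀ s ∉ A, p s = 0) (B : Finset ι) :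
    ∑ s ∈ A, p s * (if s ∈ B then 1 else 0) = ∑ s ∈ B, p s := by
  simp only [mul_ite, mul_one, mul_zero, sum_ite_mem]
  exact sum_subset inter_subset_right fun s hsB hs => hp s fun hsA => hs (mem_inter.mpr ⟨hsA, hsB⟩)

lemma sum_mul_ite_mem_mul {R : Type*} [DecidableEq ι] [NonAssocSemiring R] {p : ι → R}
    {A : Finset ι} (hp : ∀ s ∉ A, p s = 0) (B : Finset ι) (U : ι → R) :
    ∑ s ∈ A, p s * (if s ∈ B then 1 else 0) * U s = ∑ s ∈ B, p s * U s := by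
  have hpU : ∀ s ∉ A, p s * U s = 0 := fun s hs => by rw [hp s hs, zero_mul]
  simpa only [mul_ite, ite_mul, mul_one, mul_zero, zero_mul] using sum_mul_ite_mem hpU B

lemma sum_mul_mul_eq_of_sum_mul_eq {R : Type*} [NonUnitalNonAssocSemiring R]
    [PartialOrder R] [IsOrderedCancelAddMonoid R] [PosMulMono R] {p x y : ι → R}
    {A : Finset ι} (hp : ∀ s ∈ A, 0 ≤ p s) (hxy : ∀ s ∈ A, x s ≤ y s)
    (h : ∑ s ∈ A, p s * x s = ∑ s ∈ A, p s * y s) (U : ι → R) :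
    ∑ s ∈ A, p s * x s * U s = ∑ s ∈ A, p s * y s * U s := by
  have hle : ∀ s ∈ A, p s * x s ≤ p s * y s := fun s hs =>
    mul_le_mul_of_nonneg_left (hxy s hs) (hp s hs)
  have heq := (sum_eq_sum_iff_of_le hle).mp h
  exact sum_congr rfl fun s hs => by rw [heq s hs]

end FiniteSums

/-- Strategies: a local decision function at every node. Only its values at decision nodes
matter, so no decision set enters the type. -/
abbrev Strategy {n : ℕ} (S : Fin n → Type) (I : Fin n → Finset (Fin n)) : Type :=
  ∀ j, (∀ i : I j, S i.1) → S j

section InfluenceDiagram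

variable {n : ℕ} {S : Fin n → Type} {C D : Finset (Fin n)} {I : Fin n → Finset (Fin n)}
  {P : ∀ j, (∀ i : I j, S i.1) → S j → ℝ}

lemma restrict_eq_restrict_iff {s t : ∀ j, S j} {j : Fin n} :
    restrict I s j = restrict I t j ↔ ∀ i ∈ I j, s i = t i := by
  simp [_root_.restrict, funext_iff]

lemma pathProb_nonneg (hP : ∀ j ∈ C, ∀ sI a, 0 ≤ P j sI a) (s : ∀ j, S j) :
    0 ≤ pathProb C I P s :=
  prod_nonneg fun j hj => hP j hj _ _

lemma sum_pathProb_univ [∀ j, Fintype (S j)] [∀ j, Nonempty (S j)]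
    (hI : ∀ j, ∀ i ∈ I j, i < j) (hP : ∀ j sI, ∑ a, P j sI a = 1) :
    ∑ s, pathProb univ I P s = 1 := by
  have hdep (j : Fin n) :
      DependsOn (fun s : ∀ k, S k => P j (restrict I s j) (s j)) (Set.Iic j) := by
    intro s t hst
    have hr : restrict I s j = restrict I t j :=
      restrict_eq_restrict_iff.mpr fun i hi => hst i (hI j i hi).le
    simp only [hr, hst j Set.self_mem_Iic]
  have hsum (j : Fin n) (s : ∀ k, S k) :
      ∑ a, P j (restrict I (Function.update s j a) j) (Function.update s j a j) = 1 := by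
    have hr (a : S j) : restrict I (Function.update s j a) j = restrict I s j :=
      restrict_eq_restrict_iff.mpr fun i hi => Function.update_of_ne (hI j i hi).ne _ _
    simp only [hr, Function.update_self, hP]
  simpa [pathProb] using
    sum_piFinset_piecewise_prod_eq_one hdep hsum (fun _ => Classical.arbitrary _) univ

/-- The set `S(Z)` of paths compatible with the strategy `Z`. -/
noncomputable def compatiblePaths [∀ j, Fintype (S j)] (D : Finset (Fin n)) (Z : Strategy S I) :
    Finset (∀ j, S j) :=
  {s | ∀ j ∈ D, Z j (restrict I s j) = s j}

/-- The expected utility of the strategy `Z`, for arbitrary path weights `p`. -/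
noncomputable def expectedUtility [∀ j, Fintype (S j)] (D : Finset (Fin n))
    (p U : (∀ j, S j) → ℝ) (Z : Strategy S I) : ℝ :=
  ∑ s ∈ compatiblePaths D Z, p s * U s

/-- The set `A ∩ S_{a | sI}` of paths in `A` passing through the state `a` of node `j` and the
information state `sI` of `j`. -/
noncomputable def pathsThrough (A : Finset (∀ j, S j)) (j : Fin n) (a : S j)
    (sI : ∀ i : I j, S i.1) : Finset (∀ j, S j) :=
  {s ∈ A | s j = a ∧ restrict I s j = sI}

section Compatible

variable [∀ j, Fintype (S j)] {Z : Strategy S I} {s t : ∀ j, S j}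

lemma mem_compatiblePaths : s ∈ compatiblePaths D Z ↔ ∀ j ∈ D, Z j (restrict I s j) = s j := by
  simp [compatiblePaths]

lemma pathProb_univ_piecewise_single (hCD : Disjoint C D) (hCDunion : C ∪ D = univ) :
    pathProb univ I (C.piecewise P fun j sI => Pi.single (Z j sI) 1) s
      = if s ∈ compatiblePaths D Z then pathProb C I P s else 0 := by
  have hC : ∏ j ∈ C, C.piecewise P (fun j sI => Pi.single (Z j sI) 1) j (restrict I s j) (s j)
      = pathProb C I P s :=
    prod_congr rfl fun j hj => by rw [piecewise_eq_of_mem _ _ _ hj]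
  have hD : ∏ j ∈ D, C.piecewise P (fun j sI => Pi.single (Z j sI) 1) j (restrict I s j) (s j)
      = ∏ j ∈ D, if Z j (restrict I s j) = s j then 1 else 0 :=
    prod_congr rfl fun j hj => by
      simp only [piecewise_eq_of_notMem _ _ _ (disjoint_right.mp hCD hj), Pi.single_apply, eq_comm]
  rw [pathProb, ← hCDunion, prod_union hCD, hC, hD, prod_ite_zero, prod_const_one]
  simp only [mem_compatiblePaths, mul_ite, mul_one, mul_zero]

lemma sum_compatiblePaths_pathProb [∀ j, Nonempty (S j)] (hCD : Disjoint C D)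
    (hCDunion : C ∪ D = univ) (hI : ∀ j, ∀ i ∈ I j, i < j)
    (hP : ∀ j ∈ C, ∀ sI, ∑ a, P j sI a = 1) (Z : Strategy S I) :
    ∑ s ∈ compatiblePaths D Z, pathProb C I P s = 1 := by
  have hkernel (j : Fin n) (sI : ∀ i : I j, S i.1) :
      ∑ a, C.piecewise P (fun j sI => Pi.single (Z j sI) 1) j sI a = 1 := by
    by_cases hj : j ∈ C
    · simp [hj, hP]
    · simp [hj]
  simpa only [pathProb_univ_piecewise_single hCD hCDunion, sum_ite_mem, univ_inter]
    using sum_pathProb_univ hI hkernel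

lemma eq_of_mem_compatiblePaths (hI : ∀ j, ∀ i ∈ I j, i < j) (hs : s ∈ compatiblePaths D Z)
    (ht : t ∈ compatiblePaths D Z) (hst : ∀ k ∉ D, s k = t k) : s = t := by
  rw [mem_compatiblePaths] at hs ht
  funext k
  induction k using WellFoundedLT.induction with
  | ind k ih =>
    by_cases hk : k ∈ D
    · have hr : restrict I s k = restrict I t k :=
        restrict_eq_restrict_iff.mpr fun i hi => ih i (hI k i hi)
      rw [← hs k hk, ← ht k hk, hr]
    · exact hst k hk

lemma card_pathsThrough_inter_compatiblePaths_le_prod (hCDunion : C ∪ D = univ)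
    (hI : ∀ j, ∀ i ∈ I j, i < j) (A : Finset (∀ j, S j)) (j : Fin n) (a : S j)
    (sI : ∀ i : I j, S i.1) :
    #(pathsThrough A j a sI ∩ compatiblePaths D Z)
      ≤ ∏ k ∈ C \ insert j (I j), Fintype.card (S k) := by
  refine card_le_prod_card_of_injOn_restrict fun s hs t ht hst => ?_
  simp only [coe_inter, Set.mem_inter_iff, mem_coe, pathsThrough, mem_filter] at hs ht
  obtain ⟨⟨-, hsj, hsI⟩, hsZ⟩ := hs
  obtain ⟨⟨-, htj, htI⟩, htZ⟩ := ht
  refine eq_of_mem_compatiblePaths hI hsZ htZ fun k hkD => ?_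
  have hkC : k ∈ C := (mem_union.mp (hCDunion ▸ mem_univ k)).resolve_right hkD
  by_cases hk : k ∈ insert j (I j)
  · obtain rfl | hkI := mem_insert.mp hk
    · rw [hsj, htj]
    · exact restrict_eq_restrict_iff.mp (hsI.trans htI.symm) k hkI
  · exact congrFun hst ⟨k, mem_sdiff.mpr ⟨hkC, hk⟩⟩

end Compatible

/-- The coefficient `Γ(a | sI)` of the improved formulation, for the path set `A`. -/
noncomputable def pathBound [∀ j, Fintype (S j)] (C : Finset (Fin n)) (A : Finset (∀ j, S j))
    (j : Fin n) (a : S j) (sI : ∀ i : I j, S i.1) : ℕ :=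
  min #(pathsThrough A j a sI) (∏ k ∈ C \ insert j (I j), Fintype.card (S k))

lemma card_pathsThrough_inter_compatiblePaths_le_pathBound [∀ j, Fintype (S j)]
    (hCDunion : C ∪ D = univ) (hI : ∀ j, ∀ i ∈ I j, i < j) (A : Finset (∀ j, S j))
    (Z : Strategy S I) (j : Fin n) (a : S j) (sI : ∀ i : I j, S i.1) :
    #(pathsThrough A j a sI ∩ compatiblePaths D Z) ≤ pathBound C A j a sI :=
  le_min (card_le_card inter_subset_left)
    (card_pathsThrough_inter_compatiblePaths_le_prod hCDunion hI A j a sI)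

/-- Feasibility of `(z, x)` for the mixed-integer program with path set `A`, path weights `p` and
arbitrary coefficients `Γ`. The weight `x` is a function on all paths, constrained only on `A`. -/
structure IsFeasible [∀ j, Fintype (S j)] (D : Finset (Fin n)) (p : (∀ j, S j) → ℝ)
    (A : Finset (∀ j, S j)) (Γ : ∀ j, S j → (∀ i : I j, S i.1) → ℝ)
    (z : ∀ j, (∀ i : I j, S i.1) → S j → ℝ) (x : (∀ j, S j) → ℝ) : Prop where
  eq_zero_or_one : ∀ j ∈ D, ∀ sI a, z j sI a = 0 ∨ z j sI a = 1
  sum_eq_one : ∀ j ∈ D, ∀ sI, ∑ a, z j sI a = 1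
  mem_unitInterval : ∀ s ∈ A, 0 ≤ x s ∧ x s ≤ 1
  sum_pathsThrough_le : ∀ j ∈ D, ∀ a sI, ∑ s ∈ pathsThrough A j a sI, x s ≤ Γ j a sI * z j sI a
  sum_mul_eq_one : ∑ s ∈ A, p s * x s = 1

section MIP

variable [∀ j, Fintype (S j)] {p : (∀ j, S j) → ℝ} {A : Finset (∀ j, S j)}
  {Γ : ∀ j, S j → (∀ i : I j, S i.1) → ℝ} {z : ∀ j, (∀ i : I j, S i.1) → S j → ℝ}
  {x : (∀ j, S j) → ℝ} {Z : Strategy S I}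

lemma isFeasible_of_strategy (hpA : ∀ s ∉ A, p s = 0)
    (hZ : ∑ s ∈ compatiblePaths D Z, p s = 1)
    (hΓ : ∀ j ∈ D, ∀ a sI, #(pathsThrough A j a sI ∩ compatiblePaths D Z) ≤ Γ j a sI) :
    IsFeasible D p A Γ (fun j sI => Pi.single (Z j sI) 1)
      (fun s => if s ∈ compatiblePaths D Z then 1 else 0) where
  eq_zero_or_one j _ sI a := by
    rw [Pi.single_apply]
    exact (ite_eq_or_eq _ _ _).symm
  sum_eq_one j _ sI := by simp
  mem_unitInterval s _ := by split_ifs <;> simp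
  sum_pathsThrough_le j hj a sI := by
    rw [sum_boole, filter_mem_eq_inter]
    obtain rfl | ha := eq_or_ne a (Z j sI)
    · simpa using hΓ j hj (Z j sI) sI
    · have hempty : pathsThrough A j a sI ∩ compatiblePaths D Z = ∅ := by
        refine eq_empty_of_forall_notMem fun s hs => ha ?_
        obtain ⟨hs, hsZ⟩ := mem_inter.mp hs
        obtain ⟨-, rfl, rfl⟩ := mem_filter.mp hs
        exact (mem_compatiblePaths.mp hsZ j hj).symm
      simp [hempty, ha]
  sum_mul_eq_one := (sum_mul_ite_mem hpA _).trans hZ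

lemma IsFeasible.exists_strategy [∀ j, Nonempty (S j)] (h : IsFeasible D p A Γ z x) :
    ∃ Z : Strategy S I, ∀ j ∈ D, ∀ sI, z j sI = Pi.single (Z j sI) 1 := by
  have hlocal (j : Fin n) (sI : ∀ i : I j, S i.1) : ∃ a, j ∈ D → z j sI = Pi.single a 1 := by
    by_cases hj : j ∈ D
    · obtain ⟨a, ha⟩ :=
        exists_eq_single_of_sum_eq_one (h.eq_zero_or_one j hj sI) (h.sum_eq_one j hj sI)
      exact ⟨a, fun _ => ha⟩
    · exact ⟨Classical.arbitrary _, fun hjD => absurd hjD hj⟩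
  choose Z hZ using hlocal
  exact ⟨Z, fun j hj sI => hZ j sI hj⟩

lemma IsFeasible.eq_zero_of_notMem_compatiblePaths (h : IsFeasible D p A Γ z x)
    (hz : ∀ j ∈ D, ∀ sI, z j sI = Pi.single (Z j sI) 1) {s : ∀ j, S j} (hs : s ∈ A)
    (hsZ : s ∉ compatiblePaths D Z) : x s = 0 := by
  rw [mem_compatiblePaths] at hsZ
  push Not at hsZ
  obtain ⟨j, hj, hne⟩ := hsZ
  refine le_antisymm ?_ (h.mem_unitInterval s hs).1
  calc x s ≤ ∑ t ∈ pathsThrough A j (s j) (restrict I s j), x t :=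
        single_le_sum (f := x) (fun t ht => (h.mem_unitInterval t (mem_filter.mp ht).1).1)
          (mem_filter.mpr ⟨hs, rfl, rfl⟩)
    _ ≤ Γ j (s j) (restrict I s j) * z j (restrict I s j) (s j) :=
        h.sum_pathsThrough_le j hj _ _
    _ = 0 := by rw [hz j hj, Pi.single_eq_of_ne hne.symm, mul_zero]

lemma IsFeasible.sum_eq_expectedUtility (h : IsFeasible D p A Γ z x)
    (hz : ∀ j ∈ D, ∀ sI, z j sI = Pi.single (Z j sI) 1) (hp : ∀ s ∈ A, 0 ≤ p s)
    (hpA : ∀ s ∉ A, p s = 0) (hZ : ∑ s ∈ compatiblePaths D Z, p s = 1) (U : (∀ j, S j) → ℝ) :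
    ∑ s ∈ A, p s * x s * U s = expectedUtility D p U Z := by
  have hsum : ∑ s ∈ A, p s * (if s ∈ compatiblePaths D Z then 1 else 0) = 1 :=
    (sum_mul_ite_mem hpA _).trans hZ
  rw [expectedUtility, ← sum_mul_ite_mem_mul hpA]
  refine sum_mul_mul_eq_of_sum_mul_eq hp (fun s hs => ?_) (h.sum_mul_eq_one.trans hsum.symm) U
  split_ifs with hsZ
  · exact (h.mem_unitInterval s hs).2
  · exact (h.eq_zero_of_notMem_compatiblePaths hz hs hsZ).le

end MIP

end InfluenceDiagram

theorem improved_MIP_correct {n : ℕ}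
    (S : Fin n → Type) [∀ j, Fintype (S j)] [∀ j, Nonempty (S j)]
    (C D : Finset (Fin n)) (hCD : Disjoint C D) (hCDunion : C ∪ D = Finset.univ)
    (I : Fin n → Finset (Fin n)) (hI : ∀ j, ∀ i ∈ I j, i < j)
    (P : ∀ j : Fin n, (∀ i : (I j), S i.1) → S j → ℝ)
    (hPnonneg : ∀ j ∈ C, ∀ (sI : ∀ i : (I j), S i.1) (sj : S j), 0 ≤ P j sI sj)
    (hPsum : ∀ j ∈ C, ∀ sI : ∀ i : (I j), S i.1, ∑ sj : S j, P j sI sj = 1)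
    (Sstar : Finset (∀ j, S j))
    (hSstar : ∀ s : ∀ j, S j, 0 < pathProb C I P s → s ∈ Sstar)
    (U : (∀ j, S j) → ℝ) :
    ∃ M : ℝ,
      IsGreatest
        {v : ℝ | ∃ (z : ∀ j : Fin n, (∀ i : (I j), S i.1) → S j → ℝ)
            (x : (∀ j, S j) → ℝ),
          (∀ j ∈ D, ∀ (sI : ∀ i : (I j), S i.1) (sj : S j),
            z j sI sj = 0 ∨ z j sI sj = 1) ∧
          (∀ j ∈ D, ∀ sI : ∀ i : (I j), S i.1, ∑ sj : S j, z j sI sj = 1) ∧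
          (∀ s ∈ Sstar, 0 ≤ x s ∧ x s ≤ 1) ∧
          (∀ j ∈ D, ∀ (sj : S j) (sI : ∀ i : (I j), S i.1),
            (∑ s ∈ Sstar.filter
                (fun s : ∀ k, S k => s j = sj ∧ restrict I s j = sI), x s)
              ≤ ((min
                    (Sstar.filter
                      (fun s : ∀ k, S k => s j = sj ∧ restrict I s j = sI)).card
                    (∏ k ∈ C \ insert j (I j), Fintype.card (S k)) : ℕ) : ℝ)
                * z j sI sj) ∧
          (∑ s ∈ Sstar, pathProb C I P s * x s = 1) ∧
          v = ∑ s ∈ Sstar, pathProb C I P s * x s * U s} M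
      ∧ IsGreatest
          {v : ℝ | ∃ Z : ∀ j : Fin n, (∀ i : (I j), S i.1) → S j,
            v = ∑ s ∈ Finset.univ.filter
                (fun s : ∀ j, S j => ∀ j ∈ D, Z j (restrict I s j) = s j),
              pathProb C I P s * U s} M := by
  have hp := pathProb_nonneg hPnonneg
  have hpA (s) (hs : s ∉ Sstar) : pathProb C I P s = 0 :=
    (hp s).antisymm' (not_lt.mp (mt (hSstar s) hs))
  have hone := sum_compatiblePaths_pathProb hCD hCDunion hI hPsum
  obtain ⟨Z, hZ⟩ :=
    Finite.exists_max (expectedUtility D (pathProb C I P) U : Strategy S I → ℝ)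
  refine ⟨expectedUtility D (pathProb C I P) U Z, ⟨?_, ?_⟩, ⟨Z, rfl⟩, ?_⟩
  · have hΓ := card_pathsThrough_inter_compatiblePaths_le_pathBound hCDunion hI Sstar Z
    have h := isFeasible_of_strategy (Γ := fun j a sI => pathBound C Sstar j a sI) hpA (hone Z)
      fun j _ a sI => Nat.cast_le.mpr (hΓ j a sI)
    exact ⟨_, _, h.eq_zero_or_one, h.sum_eq_one, h.mem_unitInterval, h.sum_pathsThrough_le,
      h.sum_mul_eq_one, (sum_mul_ite_mem_mul hpA _ U).symm⟩
  · rintro _ ⟨z, x, h01, hsum, hx, hle, hpx, rfl⟩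
    have h : IsFeasible D (pathProb C I P) Sstar (fun j a sI => pathBound C Sstar j a sI) z x :=
      ⟨h01, hsum, hx, hle, hpx⟩
    obtain ⟨Z', hz⟩ := h.exists_strategy
    exact (h.sum_eq_expectedUtility hz (fun s _ => hp s) hpA (hone Z') U).trans_le (hZ Z')
  · rintro _ ⟨Z', rfl⟩
    exact hZ Z'
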